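/- arXiv:1208.5702 — 3 statements merged into one kernel-verified Lean document; each statement's English description precedes it below -/
import Mathlib

section
/- Let Ŝ be a p×p real matrix and λ > 0. Suppose p×p real matrices Σ, Λ and Σ', Λ' satisfy: for all indices j ≠ l, (−Λ − Σ + Ŝ)_{jl}/λ lies in the subdifferential of the absolute value at Σ_{jl} and (−Λ' − Σ' + Ŝ)_{jl}/λ lies in the subdifferential of the absolute value at Σ'_{jl}; and for all j, (Σ − Ŝ)_{jj} + Λ_{jj} = 0 and (Σ' − Ŝ)_{jj} + Λ'_{jj} = 0. Then ⟨Σ − Σ', Λ' − Λ⟩ ≥ ‖Σ − Σ'‖_F². -/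
open scoped BigOperators

/-- The squared Frobenius norm of a real matrix. -/
noncomputable def frobSq {p : ℕ} (A : Matrix (Fin p) (Fin p) ℝ) : ℝ :=
  ∑ i, ∑ j, (A i j) ^ 2

/-- The Frobenius (trace) inner product `⟨A, B⟩ = trace (Aᵀ B)` of two real matrices. -/
noncomputable def finner {p : ℕ} (A B : Matrix (Fin p) (Fin p) ℝ) : ℝ :=
  ∑ i, ∑ j, A i j * B i j

/-- `g` lies in the subdifferential of the absolute value at `y`:
`{sign y}` if `y ≠ 0`, and the interval `[-1, 1]` if `y = 0`. -/
def inSubdiffAbs (g y : ℝ) : Prop :=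
  if y = 0 then |g| ≤ 1 else g = Real.sign y

/-!
The stationarity conditions say that every entry of `Σ` is a proximal point of the corresponding
entry of `Ŝ - Λ`: for `λ|·|` off the diagonal and for the zero function on it. Proximal maps are
firmly nonexpansive, because subdifferentials are monotone. The matrix `Ŝ` cancels in the difference
`(Ŝ - Λ) - (Ŝ - Λ')`, and summing over the entries gives the claim.
-/

section Subgradient

variable {E : Type*} [SeminormedAddCommGroup E] [InnerProductSpace ℝ E]

/-- `g` is a subgradient of `f` at `y`, i.e. `g ∈ ∂f(y)` in the sense of convex analysis: the affine
function with slope `g` through `(y, f y)` is a global minorant of `f`. Convexity of `f` is not part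
of the definition. -/
def HasSubgradientAt (f : E → ℝ) (g y : E) : Prop :=
  ∀ z, f y + inner ℝ g (z - y) ≤ f z

namespace HasSubgradientAt

variable {f : E → ℝ} {g g' u u' y y' : E}

theorem inner_sub_sub_nonneg (h : HasSubgradientAt f g y) (h' : HasSubgradientAt f g' y') :
    0 ≤ inner ℝ (y - y') (g - g') := by
  have at_y' := h y'
  have at_y := h' y
  rw [real_inner_comm] at at_y at_y'
  rw [← neg_sub y y', inner_neg_left] at at_y'
  rw [inner_sub_right]
  linarith

theorem const_mul {c : ℝ} (hc : 0 ≤ c) (h : HasSubgradientAt f g y) :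
    HasSubgradientAt (fun z => c * f z) (c • g) y := fun z => by
  rw [real_inner_smul_left, ← mul_add]
  exact mul_le_mul_of_nonneg_left (h z) hc

/-- Firm nonexpansiveness of the proximal map: `u - y ∈ ∂f(y)` says that `y = prox_f(u)`. -/
theorem norm_sub_sq_le_inner (h : HasSubgradientAt f (u - y) y)
    (h' : HasSubgradientAt f (u' - y') y') :
    ‖y - y'‖ ^ 2 ≤ inner ℝ (y - y') (u - u') := by
  have subgradients_monotone := h.inner_sub_sub_nonneg h'
  rwa [sub_sub_sub_comm, inner_sub_right, real_inner_self_eq_norm_sq, sub_nonneg]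
    at subgradients_monotone

theorem sub_sq_le_mul {f : ℝ → ℝ} {u u' y y' : ℝ} (h : HasSubgradientAt f (u - y) y)
    (h' : HasSubgradientAt f (u' - y') y') : (y - y') ^ 2 ≤ (y - y') * (u - u') := by
  simpa only [Real.norm_eq_abs, sq_abs, RCLike.inner_apply, conj_trivial, mul_comm]
    using h.norm_sub_sq_le_inner h'

end HasSubgradientAt

theorem hasSubgradientAt_const (c : ℝ) (y : E) : HasSubgradientAt (fun _ => c) 0 y := fun z => by
  simp

end Subgradient

theorem abs_realSign_of_ne_zero {y : ℝ} (hy : y ≠ 0) : |Real.sign y| = 1 := by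
  rcases Real.sign_apply_eq_of_ne_zero y hy with hs | hs <;> simp [hs]

theorem realSign_mul_self (y : ℝ) : Real.sign y * y = |y| := by
  rcases eq_or_ne y 0 with rfl | hy
  · simp
  · rw [← abs_of_nonneg (Real.sign_mul_nonneg y), abs_mul, abs_realSign_of_ne_zero hy, one_mul]

namespace inSubdiffAbs

variable {g y : ℝ}

theorem abs_le_one (h : inSubdiffAbs g y) : |g| ≤ 1 := by
  unfold inSubdiffAbs at h
  split_ifs at h with hy
  · exact h
  · rw [h, abs_realSign_of_ne_zero hy]

theorem mul_self_eq_abs (h : inSubdiffAbs g y) : g * y = |y| := by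
  unfold inSubdiffAbs at h
  split_ifs at h with hy
  · simp [hy]
  · rw [h, realSign_mul_self]

theorem hasSubgradientAt (h : inSubdiffAbs g y) : HasSubgradientAt (fun x => |x|) g y := fun z =>
  calc |y| + inner ℝ g (z - y) = g * z := by
        rw [← h.mul_self_eq_abs, RCLike.inner_apply, conj_trivial]
        ring
    _ ≤ |g| * |z| := (le_abs_self _).trans_eq (abs_mul g z)
    _ ≤ |z| := mul_le_of_le_one_left (abs_nonneg z) h.abs_le_one

theorem hasSubgradientAt_const_mul {r c : ℝ} (hc : 0 < c) (h : inSubdiffAbs (r / c) y) :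
    HasSubgradientAt (fun x : ℝ => c * |x|) r y := by
  simpa only [smul_eq_mul, mul_div_cancel₀ r hc.ne'] using h.hasSubgradientAt.const_mul hc.le

end inSubdiffAbs

theorem hasSubgradientAt_entry_of_stationary {n : Type*} [DecidableEq n]
    {Shat Sg Lm : Matrix n n ℝ} {lam : ℝ} (hlam : 0 < lam)
    (hsub : ∀ j l, j ≠ l → inSubdiffAbs ((-Lm - Sg + Shat) j l / lam) (Sg j l))
    (hdiag : ∀ j, (Sg - Shat) j j + Lm j j = 0) (j l : n) :
    HasSubgradientAt (fun x => (if j = l then 0 else lam) * |x|)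
      ((Shat - Lm) j l - Sg j l) (Sg j l) := by
  rcases eq_or_ne j l with rfl | hjl
  · have residual : (Shat - Lm) j j - Sg j j = 0 := by
      have diag_eq := hdiag j
      simp only [Matrix.sub_apply] at diag_eq ⊢
      linarith
    simpa only [residual, if_true, zero_mul] using hasSubgradientAt_const 0 (Sg j j)
  · have residual : (Shat - Lm) j l - Sg j l = (-Lm - Sg + Shat) j l := by
      simp only [Matrix.sub_apply, Matrix.add_apply, Matrix.neg_apply]
      ring
    simpa only [residual, if_neg hjl] using (hsub j l hjl).hasSubgradientAt_const_mul hlam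

theorem frobSq_le_finner {p : ℕ} {A B : Matrix (Fin p) (Fin p) ℝ}
    (h : ∀ i j, A i j ^ 2 ≤ A i j * B i j) : frobSq A ≤ finner A B :=
  Finset.sum_le_sum fun i _ => Finset.sum_le_sum fun j _ => h i j

/-- Let `Ŝ` be a `p×p` real matrix and `λ > 0`.  If `(Σ, Λ)` and `(Σ', Λ')` both satisfy
the stationarity conditions `(−Λ − Σ + Ŝ)_{jl}/λ ∈ ∂|Σ_{jl}|` for `j ≠ l` and
`(Σ − Ŝ)_{jj} + Λ_{jj} = 0`, then `⟨Σ − Σ', Λ' − Λ⟩ ≥ ‖Σ − Σ'‖_F²`. -/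
theorem stmt_7 {p : ℕ}
    (Shat Sg Lm Sg' Lm' : Matrix (Fin p) (Fin p) ℝ) (lam : ℝ) (hlam : 0 < lam)
    (hsub : ∀ j l, j ≠ l → inSubdiffAbs ((-Lm - Sg + Shat) j l / lam) (Sg j l))
    (hdiag : ∀ j, (Sg - Shat) j j + Lm j j = 0)
    (hsub' : ∀ j l, j ≠ l → inSubdiffAbs ((-Lm' - Sg' + Shat) j l / lam) (Sg' j l))
    (hdiag' : ∀ j, (Sg' - Shat) j j + Lm' j j = 0) :
    finner (Sg - Sg') (Lm' - Lm) ≥ frobSq (Sg - Sg') := by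
  refine frobSq_le_finner fun j l => ?_
  have firmly_nonexpansive :=
    (hasSubgradientAt_entry_of_stationary hlam hsub hdiag j l).sub_sq_le_mul
      (hasSubgradientAt_entry_of_stationary hlam hsub' hdiag' j l)
  have shat_cancels : (Shat - Lm) j l - (Shat - Lm') j l = (Lm' - Lm) j l := by
    simp only [Matrix.sub_apply, sub_sub_sub_cancel_left]
  rwa [shat_cancels] at firmly_nonexpansive
end

section
/- Let Σ⁰ = (σ⁰_{jk}) be a p×p real symmetric matrix, let A₀ = {(j,k) : j ≠ k, σ⁰_{jk} ≠ 0} with s = |A₀|, let λ > 0, and let Ŝ be a p×p real symmetric matrix satisfying max_{j,k} |Ŝ_{jk} − σ⁰_{jk}| ≤ λ. Define F(Δ) = ½‖Δ + Σ⁰ − Ŝ‖_F² + λ|Δ + Σ⁰|₁ for p×p symmetric matrices Δ. Then for every symmetric Δ with ‖Δ‖_F = 5λ√(s+p), one has F(Δ) − F(0) ≥ (5/2)λ²(s+p) > 0. -/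
open scoped BigOperators

/-- The Frobenius norm of a real matrix. -/
noncomputable def frobNorm {p : ℕ} (A : Matrix (Fin p) (Fin p) ℝ) : ℝ :=
  Real.sqrt (frobSq A)

/-- Element-wise ℓ¹-norm of the off-diagonal entries of a matrix. -/
noncomputable def offL1 {p : ℕ} (A : Matrix (Fin p) (Fin p) ℝ) : ℝ :=
  ∑ i, ∑ j, if i ≠ j then |A i j| else 0

/-!
Expanding the square turns the change of the quadratic loss at `Δ` into
`‖Δ‖² / 2 + ⟨Δ, Σ⁰ - Ŝ⟩`, which is at least `‖Δ‖² / 2 - λ ∑ |Δ_jk|` by closeness of `Ŝ`. On the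
off-diagonal zeros of `Σ⁰` the penalty grows by exactly `λ |Δ_jk|`, which cancels the linear term;
on the other off-diagonal entries it drops by at most `λ |Δ_jk|`. Hence
`F Δ - F 0 ≥ ‖Δ‖² / 2 - 2 λ ∑_T |Δ_jk|`, where `T` consists of the diagonal and `A₀`. As
`|T| = s + p`, Cauchy–Schwarz leaves the bound `‖Δ‖ (‖Δ‖ - 4 λ √(s + p)) / 2`.
-/

section OrderedAlgebra

theorem half_sq_sub_mul_abs_le {𝕜 : Type*} [Field 𝕜] [LinearOrder 𝕜] [IsStrictOrderedRing 𝕜]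
    {a b r : 𝕜} (hab : |b - a| ≤ r) (d : 𝕜) :
    d ^ 2 / 2 - r * |d| ≤ (d + a - b) ^ 2 / 2 - (a - b) ^ 2 / 2 := by
  have hcross : (b - a) * d ≤ r * |d| :=
    calc (b - a) * d ≤ |b - a| * |d| := (le_abs_self _).trans_eq (abs_mul _ _)
      _ ≤ r * |d| := by gcongr
  linarith

theorem sum_abs_sub_sum_abs_le_sum_abs_add {ι G : Type*} [AddCommGroup G] [LinearOrder G]
    [IsOrderedAddMonoid G] (P : Finset ι) (a d : ι → G) :
    ∑ i ∈ P with a i = 0, |d i| - ∑ i ∈ P with a i ≠ 0, |d i| ≤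
      ∑ i ∈ P, |d i + a i| - ∑ i ∈ P, |a i| := by
  simp only [Finset.sum_filter, ← Finset.sum_sub_distrib]
  refine Finset.sum_le_sum fun i _ => ?_
  by_cases hi : a i = 0
  · simp [hi]
  · have htriangle : |a i| - |d i| ≤ |d i + a i| := by
      simpa [add_comm] using abs_sub_abs_le_abs_sub (a i) (-d i)
    simpa [hi, add_comm, sub_eq_add_neg] using sub_le_sub_right htriangle |a i|

end OrderedAlgebra

theorem sum_abs_le_sqrt_card_mul_sqrt {ι : Type*} (T : Finset ι) (d : ι → ℝ) :
    ∑ i ∈ T, |d i| ≤ √T.card * √(∑ i ∈ T, d i ^ 2) := by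
  simpa using Real.sum_mul_le_sqrt_mul_sqrt T (fun _ => 1) fun i => |d i|

/-- The coordinates outside `P`, together with those in `P` at which `a` does not vanish. For a
penalty on the coordinates in `P`, these are the ones where moving away from `a` need not cost. -/
def activeSet {ι R : Type*} [Fintype ι] [DecidableEq ι] [Zero R] [DecidableEq R] (P : Finset ι)
    (a : ι → R) : Finset ι :=
  {i ∈ P | a i = 0}ᶜ

theorem mem_activeSet {ι R : Type*} [Fintype ι] [DecidableEq ι] [Zero R] [DecidableEq R]
    {P : Finset ι} {a : ι → R} {i : ι} : i ∈ activeSet P a ↔ i ∈ P → a i ≠ 0 := by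
  simp [activeSet]

section PenalizedLoss

variable {ι : Type*} [Fintype ι]

/-- The lasso objective `‖x - b‖² / 2 + r ∑_{i ∈ P} |x i|`: least squares for the data `b`, with an
`ℓ¹`-penalty of weight `r` on the coordinates in `P` only. -/
noncomputable def penalizedLoss (P : Finset ι) (r : ℝ) (b x : ι → ℝ) : ℝ :=
  (∑ i, (x i - b i) ^ 2) / 2 + r * ∑ i ∈ P, |x i|

variable [DecidableEq ι] (P : Finset ι) {r : ℝ} {a b : ι → ℝ}

theorem half_sum_sq_sub_le_penalizedLoss_add_sub (hr : 0 ≤ r)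
    (hab : ∀ i, |b i - a i| ≤ r) (d : ι → ℝ) :
    (∑ i, d i ^ 2) / 2 - 2 * r * ∑ i ∈ activeSet P a, |d i| ≤
      penalizedLoss P r b (d + a) - penalizedLoss P r b a := by
  have hloss : (∑ i, d i ^ 2) / 2 - r * ∑ i, |d i| ≤
      (∑ i, (d i + a i - b i) ^ 2) / 2 - (∑ i, (a i - b i) ^ 2) / 2 := by
    simp only [Finset.sum_div, Finset.mul_sum, ← Finset.sum_sub_distrib]
    exact Finset.sum_le_sum fun i _ => half_sq_sub_mul_abs_le (hab i) (d i)
  have hpenalty := mul_le_mul_of_nonneg_left (sum_abs_sub_sum_abs_le_sum_abs_add P a d) hr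
  have hsupport : r * ∑ i ∈ P with a i ≠ 0, |d i| ≤ r * ∑ i ∈ activeSet P a, |d i| := by
    gcongr
    intro i
    simp +contextual [mem_activeSet]
  have hsplit : ∑ i ∈ P with a i = 0, |d i| + ∑ i ∈ activeSet P a, |d i| = ∑ i, |d i| :=
    Finset.sum_add_sum_compl _ _
  rw [← hsplit] at hloss
  simp only [penalizedLoss, Pi.add_apply]
  linarith

theorem half_sq_sub_mul_sqrt_le_penalizedLoss_add_sub (hr : 0 ≤ r)
    (hab : ∀ i, |b i - a i| ≤ r) (d : ι → ℝ) :
    √(∑ i, d i ^ 2) ^ 2 / 2 - 2 * (r * √(activeSet P a).card) * √(∑ i, d i ^ 2) ≤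
      penalizedLoss P r b (d + a) - penalizedLoss P r b a := by
  have hcauchy : ∑ i ∈ activeSet P a, |d i| ≤ √(activeSet P a).card * √(∑ i, d i ^ 2) := by
    refine (sum_abs_le_sqrt_card_mul_sqrt _ d).trans ?_
    gcongr
    exact Finset.subset_univ _
  have hscaled := mul_le_mul_of_nonneg_left hcauchy hr
  rw [Real.sq_sqrt (by positivity)]
  linarith [half_sum_sq_sub_le_penalizedLoss_add_sub P hr hab d]

variable {P}

theorem le_penalizedLoss_add_sub_of_le_sqrt {c : ℝ} (hc : 2 ≤ c) (hr : 0 ≤ r)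
    (hab : ∀ i, |b i - a i| ≤ r) {d : ι → ℝ}
    (hd : c * r * √(activeSet P a).card ≤ √(∑ i, d i ^ 2)) :
    (c ^ 2 / 2 - 2 * c) * r ^ 2 * (activeSet P a).card ≤
      penalizedLoss P r b (d + a) - penalizedLoss P r b a := by
  refine le_trans ?_ (half_sq_sub_mul_sqrt_le_penalizedLoss_add_sub P hr hab d)
  set k : ℝ := ((activeSet P a).card : ℝ)
  set x := √(∑ i, d i ^ 2)
  have hk : √k ^ 2 = k := Real.sq_sqrt (Nat.cast_nonneg _)
  have hslope : 0 ≤ (c - 2) * (r * √k) := mul_nonneg (sub_nonneg.2 hc) (by positivity)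
  -- `x ^ 2 / 2 - 2 * (r * √k) * x` is increasing in `x` from `x = 2 * r * √k` on.
  have hfactor : 0 ≤ (x - c * r * √k) * (x + c * r * √k - 4 * (r * √k)) :=
    mul_nonneg (sub_nonneg.2 hd) (by linarith)
  linear_combination hfactor / 2 - (c ^ 2 / 2 - 2 * c) * r ^ 2 * hk

end PenalizedLoss

section Matrix

theorem card_activeSet_offDiag {n R : Type*} [Fintype n] [DecidableEq n] [Zero R]
    [DecidableEq R] (A : Matrix n n R) :
    (activeSet Finset.univ.offDiag (Function.uncurry A)).card =
      (Finset.univ.filter fun x : n × n => x.1 ≠ x.2 ∧ A x.1 x.2 ≠ 0).card + Fintype.card n := by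
  have hunion : activeSet Finset.univ.offDiag (Function.uncurry A) =
      (Finset.univ.filter fun x : n × n => x.1 ≠ x.2 ∧ A x.1 x.2 ≠ 0) ∪ Finset.univ.diag := by
    ext ⟨i, j⟩
    by_cases hij : i = j <;> simp [mem_activeSet, hij, Function.uncurry]
  have hdisjoint : Disjoint (Finset.univ.filter fun x : n × n => x.1 ≠ x.2 ∧ A x.1 x.2 ≠ 0)
      Finset.univ.diag := by
    rw [Finset.disjoint_left]
    simp +contextual
  rw [hunion, Finset.card_union_of_disjoint hdisjoint, Finset.diag_card, Finset.card_univ]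

variable {p : ℕ}

theorem frobSq_eq_sum_uncurry (A : Matrix (Fin p) (Fin p) ℝ) :
    frobSq A = ∑ x, Function.uncurry A x ^ 2 :=
  (Fintype.sum_prod_type' fun i j => A i j ^ 2).symm

theorem offL1_eq_sum_offDiag (A : Matrix (Fin p) (Fin p) ℝ) :
    offL1 A = ∑ x ∈ Finset.univ.offDiag, |Function.uncurry A x| := by
  rw [offL1, ← Fintype.sum_prod_type' fun i j => if i ≠ j then |A i j| else 0,
    ← Finset.sum_filter]
  congr 1
  ext x
  simp

theorem frobSq_sub_div_two_add_mul_offL1 (r : ℝ) (B A : Matrix (Fin p) (Fin p) ℝ) :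
    frobSq (A - B) / 2 + r * offL1 A =
      penalizedLoss Finset.univ.offDiag r (Function.uncurry B) (Function.uncurry A) := by
  rw [frobSq_eq_sum_uncurry, offL1_eq_sum_offDiag]
  rfl

end Matrix

theorem stmt_8_general {p : ℕ} (hp : 1 ≤ p) (Sig0 : Matrix (Fin p) (Fin p) ℝ) (s : ℕ)
    (hs : s = (Finset.univ.filter
      (fun jk : Fin p × Fin p => jk.1 ≠ jk.2 ∧ Sig0 jk.1 jk.2 ≠ 0)).card)
    (lam : ℝ) (hlam : 0 < lam) (Shat : Matrix (Fin p) (Fin p) ℝ)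
    (hclose : ∀ j k, |Shat j k - Sig0 j k| ≤ lam) (Δ : Matrix (Fin p) (Fin p) ℝ)
    (hnorm : 5 * lam * Real.sqrt (s + p) ≤ frobNorm Δ) :
    (frobSq (Δ + Sig0 - Shat) / 2 + lam * offL1 (Δ + Sig0)) -
        (frobSq ((0 : Matrix (Fin p) (Fin p) ℝ) + Sig0 - Shat) / 2 +
          lam * offL1 ((0 : Matrix (Fin p) (Fin p) ℝ) + Sig0)) ≥
      (5 / 2) * lam ^ 2 * (s + p) ∧
    (0 : ℝ) < (5 / 2) * lam ^ 2 * (s + p) := by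
  have hcard : (s : ℝ) + p = (activeSet Finset.univ.offDiag (Function.uncurry Sig0)).card := by
    rw [card_activeSet_offDiag, ← hs, Fintype.card_fin, Nat.cast_add]
  refine ⟨?_, by positivity⟩
  rw [frobNorm, frobSq_eq_sum_uncurry, hcard] at hnorm
  rw [zero_add, frobSq_sub_div_two_add_mul_offL1, frobSq_sub_div_two_add_mul_offL1, hcard]
  have hconst : (5 / 2 : ℝ) = 5 ^ 2 / 2 - 2 * 5 := by norm_num
  rw [hconst]
  exact le_penalizedLoss_add_sub_of_le_sqrt (by norm_num) hlam.le
    (fun x : Fin p × Fin p => hclose x.1 x.2) hnorm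

/-- Let `Σ⁰` be a `p×p` real symmetric matrix with off-diagonal support of size `s`, let
`λ > 0`, and let `Ŝ` be a symmetric matrix with `max_{j,k} |Ŝ_{jk} − σ⁰_{jk}| ≤ λ`.  With
`F(Δ) = ½‖Δ + Σ⁰ − Ŝ‖_F² + λ|Δ + Σ⁰|₁`, every symmetric `Δ` with
`‖Δ‖_F = 5λ√(s+p)` satisfies `F(Δ) − F(0) ≥ (5/2)λ²(s+p) > 0`. -/
theorem stmt_8 {p : ℕ} (hp : 1 ≤ p)
    (Sig0 : Matrix (Fin p) (Fin p) ℝ) (hSig0 : Sig0.IsSymm)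
    (s : ℕ)
    (hs : s = (Finset.univ.filter
      (fun jk : Fin p × Fin p => jk.1 ≠ jk.2 ∧ Sig0 jk.1 jk.2 ≠ 0)).card)
    (lam : ℝ) (hlam : 0 < lam)
    (Shat : Matrix (Fin p) (Fin p) ℝ) (hShat : Shat.IsSymm)
    (hclose : ∀ j k, |Shat j k - Sig0 j k| ≤ lam)
    (Δ : Matrix (Fin p) (Fin p) ℝ) (hΔ : Δ.IsSymm)
    (hnorm : frobNorm Δ = 5 * lam * Real.sqrt (s + p)) :
    (frobSq (Δ + Sig0 - Shat) / 2 + lam * offL1 (Δ + Sig0)) -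
        (frobSq ((0 : Matrix (Fin p) (Fin p) ℝ) + Sig0 - Shat) / 2 +
          lam * offL1 ((0 : Matrix (Fin p) (Fin p) ℝ) + Sig0)) ≥
      (5 / 2) * lam ^ 2 * (s + p) ∧
    (0 : ℝ) < (5 / 2) * lam ^ 2 * (s + p) :=
  stmt_8_general hp Sig0 s hs lam hlam Shat hclose Δ hnorm.ge
end

section
/- Let X and Y be real random variables, let η > 0, K₁ > 0, σ_max > 0 satisfy E[exp(t·X²)] ≤ K₁ and E[exp(t·Y²)] ≤ K₁ for all |t| ≤ η, and suppose σ = E[XY] satisfies |σ| ≤ σ_max. Then for any 0 < t₁ ≤ η/2, E[(XY − σ)²·exp(t₁|XY − σ|)] ≤ 2K₁(4η^{-2} + σ_max²)·exp(½η·σ_max). -/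
open MeasureTheory

/-!
Put `A = exp (η / 2 * |XY|)`. The tilt satisfies `exp (t₁ * |XY - σ|) ≤ A * exp (η / 2 * |σ|)`, and
`u ^ 2 ≤ exp u` at `u = η / 2 * |XY|` bounds the quadratic factor by a multiple of `A`. Together
they cost `A ^ 2 = exp (η * |XY|)`, which `2 * |XY| ≤ X ^ 2 + Y ^ 2` and the convexity of `exp`
control by the mean of `exp (η * X ^ 2)` and `exp (η * Y ^ 2)`.
-/

theorem sq_le_exp {u : ℝ} (hu : 0 ≤ u) : u ^ 2 ≤ Real.exp u := by
  have le_exp_half : u ≤ Real.exp (u / 2) :=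
    calc u = 2 * (u / 2) := by ring
      _ ≤ Real.exp 1 * (u / 2) := by gcongr; linarith [Real.add_one_le_exp 1]
      _ ≤ Real.exp (u / 2) := Real.exp_one_mul_le_exp
  calc u ^ 2 ≤ Real.exp (u / 2) ^ 2 := by gcongr
    _ = Real.exp u := by rw [← Real.exp_nat_mul]; congr 1; push_cast; ring

theorem sq_le_one_div_sq_mul_exp_mul_abs {a : ℝ} (ha : 0 < a) (z : ℝ) :
    z ^ 2 ≤ 1 / a ^ 2 * Real.exp (a * |z|) :=
  calc z ^ 2 = 1 / a ^ 2 * (a * |z|) ^ 2 := by rw [mul_pow, sq_abs]; field_simp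
    _ ≤ 1 / a ^ 2 * Real.exp (a * |z|) := by gcongr; exact sq_le_exp (by positivity)

theorem sub_sq_le_mul_exp_mul_abs {a c s : ℝ} (ha : 0 < a) (hc : |c| ≤ s) (z : ℝ) :
    (z - c) ^ 2 ≤ 2 * (1 / a ^ 2 + s ^ 2) * Real.exp (a * |z|) := by
  have hz := sq_le_one_div_sq_mul_exp_mul_abs ha z
  have hcs : c ^ 2 ≤ s ^ 2 * Real.exp (a * |z|) :=
    (sq_le_sq.mpr (hc.trans (le_abs_self s))).trans
      (le_mul_of_one_le_right (sq_nonneg s) (Real.one_le_exp (by positivity)))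
  calc (z - c) ^ 2 ≤ 2 * (z ^ 2 + c ^ 2) := by linarith [sq_nonneg (z + c)]
    _ ≤ 2 * (1 / a ^ 2 * Real.exp (a * |z|) + s ^ 2 * Real.exp (a * |z|)) := by gcongr
    _ = 2 * (1 / a ^ 2 + s ^ 2) * Real.exp (a * |z|) := by ring

theorem exp_mul_abs_sub_le {a c s t : ℝ} (ha : 0 ≤ a) (hc : |c| ≤ s) (hta : t ≤ a) (z : ℝ) :
    Real.exp (t * |z - c|) ≤ Real.exp (a * |z|) * Real.exp (a * s) := by
  rw [← Real.exp_add, ← mul_add]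
  gcongr
  exact (abs_sub z c).trans (by gcongr)

theorem sub_sq_mul_exp_mul_abs_sub_le {a c s t : ℝ} (ha : 0 < a) (hc : |c| ≤ s) (hta : t ≤ a)
    (z : ℝ) :
    (z - c) ^ 2 * Real.exp (t * |z - c|) ≤
      2 * (1 / a ^ 2 + s ^ 2) * Real.exp (a * s) * Real.exp (2 * a * |z|) :=
  calc (z - c) ^ 2 * Real.exp (t * |z - c|)
      ≤ (2 * (1 / a ^ 2 + s ^ 2) * Real.exp (a * |z|)) *
          (Real.exp (a * |z|) * Real.exp (a * s)) := by
        gcongr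
        · exact sub_sq_le_mul_exp_mul_abs ha hc z
        · exact exp_mul_abs_sub_le ha.le hc hta z
    _ = 2 * (1 / a ^ 2 + s ^ 2) * Real.exp (a * s) * Real.exp (2 * a * |z|) := by
        rw [mul_assoc 2 a, two_mul (a * |z|), Real.exp_add]; ring

theorem two_mul_exp_mul_abs_mul_le {η : ℝ} (hη : 0 ≤ η) (x y : ℝ) :
    2 * Real.exp (η * |x * y|) ≤ Real.exp (η * x ^ 2) + Real.exp (η * y ^ 2) := by
  have abs_mul_le : |x * y| ≤ (x ^ 2 + y ^ 2) / 2 := by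
    rw [abs_mul, ← sq_abs x, ← sq_abs y]
    linarith [two_mul_le_add_sq |x| |y|]
  have exp_midpoint_le := convexOn_exp.2 (Set.mem_univ (η * x ^ 2)) (Set.mem_univ (η * y ^ 2))
    one_half_pos.le one_half_pos.le (add_halves 1)
  calc 2 * Real.exp (η * |x * y|) ≤ 2 * Real.exp (η * ((x ^ 2 + y ^ 2) / 2)) := by gcongr
    _ = 2 * Real.exp ((1 / 2 : ℝ) • (η * x ^ 2) + (1 / 2 : ℝ) • (η * y ^ 2)) := by
        simp only [smul_eq_mul]; congr 2; ring
    _ ≤ 2 * ((1 / 2 : ℝ) • Real.exp (η * x ^ 2) + (1 / 2 : ℝ) • Real.exp (η * y ^ 2)) :=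
        mul_le_mul_of_nonneg_left exp_midpoint_le zero_le_two
    _ = Real.exp (η * x ^ 2) + Real.exp (η * y ^ 2) := by simp only [smul_eq_mul]; ring

section Integrated

variable {Ω : Type*} [MeasurableSpace Ω] {μ : Measure Ω}

theorem lintegral_sub_sq_mul_exp_mul_abs_sub_le {a c s t : ℝ} (ha : 0 < a) (hc : |c| ≤ s)
    (hta : t ≤ a) (Z : Ω → ℝ) :
    ∫⁻ ω, ENNReal.ofReal ((Z ω - c) ^ 2 * Real.exp (t * |Z ω - c|)) ∂μ ≤
      ENNReal.ofReal (2 * (1 / a ^ 2 + s ^ 2) * Real.exp (a * s)) *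
        ∫⁻ ω, ENNReal.ofReal (Real.exp (2 * a * |Z ω|)) ∂μ := by
  rw [← lintegral_const_mul' _ _ ENNReal.ofReal_ne_top]
  refine lintegral_mono fun ω ↦ ?_
  rw [← ENNReal.ofReal_mul (by positivity)]
  exact ENNReal.ofReal_le_ofReal (sub_sq_mul_exp_mul_abs_sub_le ha hc hta (Z ω))

theorem two_mul_lintegral_exp_mul_abs_mul_le {X : Ω → ℝ} (hX : AEMeasurable X μ) (Y : Ω → ℝ)
    {η : ℝ} (hη : 0 ≤ η) :
    2 * ∫⁻ ω, ENNReal.ofReal (Real.exp (η * |X ω * Y ω|)) ∂μ ≤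
      ∫⁻ ω, ENNReal.ofReal (Real.exp (η * X ω ^ 2)) ∂μ +
        ∫⁻ ω, ENNReal.ofReal (Real.exp (η * Y ω ^ 2)) ∂μ := by
  rw [← lintegral_const_mul' _ _ ENNReal.ofNat_ne_top, ← lintegral_add_left' (by fun_prop)]
  refine lintegral_mono fun ω ↦ ?_
  rw [← ENNReal.ofReal_add (Real.exp_pos _).le (Real.exp_pos _).le, ← ENNReal.ofReal_ofNat 2,
    ← ENNReal.ofReal_mul zero_le_two]
  exact ENNReal.ofReal_le_ofReal (two_mul_exp_mul_abs_mul_le hη (X ω) (Y ω))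

theorem lintegral_exp_mul_abs_mul_le {X Y : Ω → ℝ} (hX : AEMeasurable X μ) {η : ℝ} (hη : 0 ≤ η)
    {K : ENNReal} (hXK : ∫⁻ ω, ENNReal.ofReal (Real.exp (η * X ω ^ 2)) ∂μ ≤ K)
    (hYK : ∫⁻ ω, ENNReal.ofReal (Real.exp (η * Y ω ^ 2)) ∂μ ≤ K) :
    ∫⁻ ω, ENNReal.ofReal (Real.exp (η * |X ω * Y ω|)) ∂μ ≤ K := by
  rw [← ENNReal.mul_le_mul_iff_right two_ne_zero ENNReal.ofNat_ne_top, two_mul K]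
  exact (two_mul_lintegral_exp_mul_abs_mul_le hX Y hη).trans (add_le_add hXK hYK)

theorem stmt_15_general {X Y : Ω → ℝ} (hX : AEMeasurable X μ) {η K s c t : ℝ} (hη : 0 < η)
    (hXK : ∫⁻ ω, ENNReal.ofReal (Real.exp (η * X ω ^ 2)) ∂μ ≤ ENNReal.ofReal K)
    (hYK : ∫⁻ ω, ENNReal.ofReal (Real.exp (η * Y ω ^ 2)) ∂μ ≤ ENNReal.ofReal K)
    (hc : |c| ≤ s) (ht : t ≤ η / 2) :
    ∫⁻ ω, ENNReal.ofReal ((X ω * Y ω - c) ^ 2 * Real.exp (t * |X ω * Y ω - c|)) ∂μ ≤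
      ENNReal.ofReal (2 * K * (4 / η ^ 2 + s ^ 2) * Real.exp (1 / 2 * η * s)) :=
  calc ∫⁻ ω, ENNReal.ofReal ((X ω * Y ω - c) ^ 2 * Real.exp (t * |X ω * Y ω - c|)) ∂μ
      ≤ ENNReal.ofReal (2 * (1 / (η / 2) ^ 2 + s ^ 2) * Real.exp (η / 2 * s)) *
          ∫⁻ ω, ENNReal.ofReal (Real.exp (2 * (η / 2) * |X ω * Y ω|)) ∂μ :=
        lintegral_sub_sq_mul_exp_mul_abs_sub_le (half_pos hη) hc ht fun ω ↦ X ω * Y ω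
    _ ≤ ENNReal.ofReal (2 * (1 / (η / 2) ^ 2 + s ^ 2) * Real.exp (η / 2 * s)) *
          ENNReal.ofReal K := by
        rw [mul_div_cancel₀ η two_ne_zero]
        gcongr
        exact lintegral_exp_mul_abs_mul_le hX hη.le hXK hYK
    _ = ENNReal.ofReal (2 * K * (4 / η ^ 2 + s ^ 2) * Real.exp (1 / 2 * η * s)) := by
        rw [← ENNReal.ofReal_mul (by positivity)]
        ring_nf

end Integrated

/-- Let `X`, `Y` be real random variables with `E[exp(t X²)] ≤ K₁` and
`E[exp(t Y²)] ≤ K₁` for all `|t| ≤ η`, and suppose `σ = E[XY]` satisfies `|σ| ≤ σ_max`.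
Then for any `0 < t₁ ≤ η/2`,
`E[(XY − σ)² exp(t₁ |XY − σ|)] ≤ 2 K₁ (4 η⁻² + σ_max²) exp(½ η σ_max)`. -/
theorem stmt_15 {Ω : Type*} [MeasurableSpace Ω] (μ : Measure Ω) [IsProbabilityMeasure μ]
    (X Y : Ω → ℝ) (hX : Measurable X) (hY : Measurable Y)
    (η K₁ σmax : ℝ) (hη : 0 < η) (hK₁ : 0 < K₁) (hσmax : 0 < σmax)
    (hXtail : ∀ t : ℝ, |t| ≤ η →
      ∫⁻ ω, ENNReal.ofReal (Real.exp (t * X ω ^ 2)) ∂μ ≤ ENNReal.ofReal K₁)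
    (hYtail : ∀ t : ℝ, |t| ≤ η →
      ∫⁻ ω, ENNReal.ofReal (Real.exp (t * Y ω ^ 2)) ∂μ ≤ ENNReal.ofReal K₁)
    (σ : ℝ) (hσ : σ = ∫ ω, X ω * Y ω ∂μ) (hσb : |σ| ≤ σmax)
    (t₁ : ℝ) (ht₁ : 0 < t₁) (ht₁η : t₁ ≤ η / 2) :
    ∫⁻ ω, ENNReal.ofReal ((X ω * Y ω - σ) ^ 2 * Real.exp (t₁ * |X ω * Y ω - σ|)) ∂μ
      ≤ ENNReal.ofReal (2 * K₁ * (4 / η ^ 2 + σmax ^ 2) * Real.exp (1 / 2 * η * σmax)) :=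
  stmt_15_general hX.aemeasurable hη (hXtail η (abs_of_pos hη).le) (hYtail η (abs_of_pos hη).le)
    hσb ht₁η
end
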